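/- arXiv:1104.2568 — 3 statements merged into one kernel-verified Lean document; each statement's English description precedes it below -/
import Mathlib

section
/- For every z ∈ ℂ^g the series Σ_{m∈ℤ^g} exp((1/2)⟨Bm,m⟩ + ⟨m,z⟩) converges absolutely, and the Riemann theta function Θ : ℂ^g → ℂ that it defines is holomorphic (complex analytic) on all of ℂ^g. -/
open Complex ComplexConjugate

noncomputable section

/-- Bilinear pairing ⟨u,v⟩ = Σ uᵢ vᵢ (no complex conjugation). -/
def pairC {g : ℕ} (u v : Fin g → ℂ) : ℂ := ∑ i, u i * v i

/-- The Riemann theta function with period matrix `B`. -/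
def theta {g : ℕ} (B : Matrix (Fin g) (Fin g) ℂ) (z : Fin g → ℂ) : ℂ :=
  ∑' m : Fin g → ℤ,
    Complex.exp ((1 / 2) * pairC (B.mulVec (fun i => (m i : ℂ))) (fun i => (m i : ℂ))
      + pairC (fun i => (m i : ℂ)) z)

lemma aux_swap {ι : Type*} (F : ι → ℕ → ℂ) (u : ι → ℂ) (v : ℕ → ℂ)
    (hF : Summable fun r : ι × ℕ => F r.1 r.2)
    (hu : ∀ i, HasSum (fun n => F i n) (u i)) (hv : ∀ n, HasSum (fun i => F i n) (v n)) :
    HasSum v (∑' i, u i) := by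
  have h1 : HasSum u (∑' r : ι × ℕ, F r.1 r.2) := hF.hasSum.prod_fiberwise hu
  have h2 : HasSum (fun r : ℕ × ι => F r.2 r.1) (∑' r : ι × ℕ, F r.1 r.2) :=
    (Equiv.prodComm ℕ ι).hasSum_iff.2 hF.hasSum
  rw [h1.tsum_eq]
  exact h2.prod_fiberwise hv

lemma aux_apply {ι E : Type*} [NormedAddCommGroup E] [NormedSpace ℂ E] {n : ℕ}
    (Q : ι → ContinuousMultilinearMap ℂ (fun _ : Fin n => E) ℂ)
    (hQ : Summable fun i => ‖Q i‖) (y : E) :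
    HasSum (fun i => Q i fun _ => y) ((∑' i, Q i) fun _ => y) := by
  have h : HasSum Q (∑' i, Q i) := (Summable.of_norm hQ).hasSum
  exact h.mapL (ContinuousMultilinearMap.apply ℂ (fun _ : Fin n => E) ℂ (fun _ => y))

set_option maxHeartbeats 1000000 in
lemma aux_analytic {ι E : Type*} [NormedAddCommGroup E] [NormedSpace ℂ E]
    (a : ι → ℂ) (l : ι → (E →L[ℂ] ℂ))
    (h : Summable fun i => ‖a i‖ * Real.exp ‖l i‖) :
    AnalyticAt ℂ (fun y => ∑' i, a i * Complex.exp (l i y)) 0 := by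
  let q : ι → FormalMultilinearSeries ℂ E ℂ :=
    fun i n => a i • ((NormedSpace.expSeries ℂ ℂ).compContinuousLinearMap (l i)) n
  have hq : ∀ i n, ‖q i n‖ ≤ ‖a i‖ * (‖l i‖ ^ n / n.factorial) := by
    intro i n
    refine ContinuousMultilinearMap.opNorm_le_bound (by positivity) fun v => ?_
    have h1 : q i n v = a i * ((n.factorial : ℂ)⁻¹ * (List.ofFn fun j => l i (v j)).prod) := by
      simp [q, NormedSpace.expSeries, Function.comp_def]
    rw [h1, List.prod_ofFn, norm_mul, norm_mul, norm_prod, norm_inv, Complex.norm_natCast]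
    have h2 : ∏ j, ‖l i (v j)‖ ≤ ‖l i‖ ^ n * ∏ j, ‖v j‖ := by
      calc ∏ j, ‖l i (v j)‖ ≤ ∏ j, (‖l i‖ * ‖v j‖) :=
            Finset.prod_le_prod (fun _ _ => norm_nonneg _) fun j _ => (l i).le_opNorm _
        _ = _ := by simp [Finset.prod_mul_distrib]
    calc ‖a i‖ * ((n.factorial : ℝ)⁻¹ * ∏ j, ‖l i (v j)‖)
        ≤ ‖a i‖ * ((n.factorial : ℝ)⁻¹ * (‖l i‖ ^ n * ∏ j, ‖v j‖)) := by gcongr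
      _ = _ := by ring
  have hexp : ∀ x : ℝ, HasSum (fun n : ℕ => x ^ n / n.factorial) (Real.exp x) := by
    intro x
    rw [Real.exp_eq_exp_ℝ]
    exact NormedSpace.expSeries_div_hasSum_exp x
  have hS : Summable fun p : ι × ℕ => ‖a p.1‖ * (‖l p.1‖ ^ p.2 / p.2.factorial) := by
    have hs : ∀ i, HasSum (fun n : ℕ => ‖a i‖ * (‖l i‖ ^ n / n.factorial))
        (‖a i‖ * Real.exp ‖l i‖) := fun i => (hexp ‖l i‖).mul_left ‖a i‖
    have hnn : (0 : ι × ℕ → ℝ) ≤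
        fun p : ι × ℕ => ‖a p.1‖ * (‖l p.1‖ ^ p.2 / p.2.factorial) := by
      intro p
      simp only [Pi.zero_apply]
      positivity
    refine (summable_prod_of_nonneg hnn).2 ⟨fun i => (hs i).summable, ?_⟩
    exact h.congr fun i => (hs i).tsum_eq.symm
  have hS' : ∀ n, Summable fun i => ‖a i‖ * (‖l i‖ ^ n / n.factorial) := fun n =>
    (hS.prod_symm).prod_factor n
  have hqs : ∀ n, Summable fun i => ‖q i n‖ := fun n =>
    Summable.of_nonneg_of_le (fun _ => norm_nonneg _) (fun i => hq i n) (hS' n)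
  let p : FormalMultilinearSeries ℂ E ℂ := fun n => ∑' i, q i n
  have hp : HasFPowerSeriesOnBall (fun y => ∑' i, a i * Complex.exp (l i y)) p 0 1 := by
    refine ⟨?_, one_pos, ?_⟩
    · refine p.le_radius_of_bound (r := 1) (∑' i, ‖a i‖ * Real.exp ‖l i‖) fun n => ?_
      simp only [NNReal.coe_one, one_pow, mul_one]
      refine (norm_tsum_le_tsum_norm (hqs n)).trans ?_
      refine Summable.tsum_le_tsum (fun i => (hq i n).trans ?_) (hqs n) h
      gcongr
      exact le_hasSum (hexp _) n fun j _ => by positivity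
    · intro y hy
      have hy1 : ‖y‖ < 1 := by
        rw [Metric.mem_eball, edist_zero_right, ← ofReal_norm, ENNReal.ofReal_lt_one] at hy
        exact hy
      have hbd : ∀ i n, ‖q i n fun _ => y‖ ≤ ‖a i‖ * (‖l i‖ ^ n / n.factorial) := by
        intro i n
        refine ((q i n).le_opNorm _).trans ?_
        refine (mul_le_of_le_one_right (norm_nonneg _) ?_).trans (hq i n)
        exact Finset.prod_le_one (fun _ _ => norm_nonneg _) fun _ _ => hy1.le
      have hsum : Summable fun r : ι × ℕ => q r.1 r.2 fun _ => y :=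
        Summable.of_norm_bounded hS fun r => hbd r.1 r.2
      have hi : ∀ i, HasSum (fun n => q i n fun _ => y) (a i * Complex.exp (l i y)) := by
        intro i
        have := (NormedSpace.expSeries_hasSum_exp (𝕂 := ℂ) (l i y)).mul_left (a i)
        rw [← Complex.exp_eq_exp_ℂ] at this
        exact this
      have hn : ∀ n, HasSum (fun i => q i n fun _ => y) (p n fun _ => y) := by
        intro n
        exact aux_apply (fun i => q i n) (hqs n) y
      have h2 := aux_swap (fun i n => q i n fun _ => y) _ _ hsum hi hn
      rw [zero_add]
      exact h2
  exact hp.analyticAt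

lemma aux_prod {f : ℤ → ℝ} (h0 : ∀ n, 0 ≤ f n) (hf : Summable f) (g : ℕ) :
    Summable fun m : Fin g → ℤ => ∏ i, f (m i) := by
  induction g with
  | zero => exact Summable.of_finite
  | succ g ih =>
    have h := hf.mul_of_nonneg ih h0 (fun m => Finset.prod_nonneg fun i _ => h0 _)
    rw [← (Fin.consEquiv (fun _ : Fin (g + 1) => ℤ)).summable_iff]
    refine h.congr fun x => ?_
    simp [Fin.consEquiv, Fin.prod_univ_succ]

lemma aux_exp : Summable fun n : ℤ => Real.exp (-|(n : ℝ)|) := by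
  have h : Summable fun n : ℕ => Real.exp (-(n : ℝ)) := Real.summable_exp_neg_nat
  refine Summable.of_nat_of_neg (by simpa using h) (by simpa using h)

lemma aux_neg {g : ℕ} (hg : 1 ≤ g) (A : Fin g → Fin g → ℝ)
    (hA : ∀ x : Fin g → ℝ, x ≠ 0 → ∑ i, ∑ j, A i j * x i * x j < 0) :
    ∃ c > 0, ∀ x : Fin g → ℝ, ∑ i, ∑ j, A i j * x i * x j ≤ - c * ∑ i, x i ^ 2 := by
  have : Nonempty (Fin g) := ⟨⟨0, hg⟩⟩
  have hne : (Metric.sphere (0 : Fin g → ℝ) 1).Nonempty :=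
    NormedSpace.sphere_nonempty.2 zero_le_one
  obtain ⟨x0, hx0, hmax⟩ := (isCompact_sphere (0 : Fin g → ℝ) 1).exists_isMaxOn hne
    (f := fun x => ∑ i, ∑ j, A i j * x i * x j) (by fun_prop)
  have hx0' : x0 ≠ 0 := by
    rintro rfl
    simp at hx0
  have hlt := hA x0 hx0'
  set M := ∑ i, ∑ j, A i j * x0 i * x0 j with hM
  have hgpos : (0 : ℝ) < g := by exact_mod_cast hg
  refine ⟨-M / g, div_pos (by linarith) hgpos, fun x => ?_⟩
  by_cases hx : x = 0
  · simp [hx]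
  have hn : 0 < ‖x‖ := norm_pos_iff.2 hx
  have h1 : ∑ i, ∑ j, A i j * (‖x‖⁻¹ • x) i * (‖x‖⁻¹ • x) j ≤ M :=
    hmax (by simp [norm_smul, hn.ne'])
  have h2 : ∑ i, ∑ j, A i j * (‖x‖⁻¹ • x) i * (‖x‖⁻¹ • x) j
      = (‖x‖ ^ 2)⁻¹ * ∑ i, ∑ j, A i j * x i * x j := by
    simp only [Finset.mul_sum, Pi.smul_apply, smul_eq_mul]
    refine Finset.sum_congr rfl fun i _ => Finset.sum_congr rfl fun j _ => ?_
    field_simp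
  have h3 : ∑ i, ∑ j, A i j * x i * x j ≤ M * ‖x‖ ^ 2 := by
    rw [h2, inv_mul_le_iff₀ (by positivity)] at h1
    linarith
  have h4 : ∑ i, x i ^ 2 ≤ g * ‖x‖ ^ 2 := by
    calc ∑ i, x i ^ 2 ≤ ∑ _i : Fin g, ‖x‖ ^ 2 := by
          refine Finset.sum_le_sum fun i _ => ?_
          have := norm_le_pi_norm x i
          rw [Real.norm_eq_abs] at this
          rw [← sq_abs]
          exact pow_le_pow_left₀ (abs_nonneg _) this 2
      _ = _ := by simp
  have h5 : M * ‖x‖ ^ 2 ≤ M / g * ∑ i, x i ^ 2 := by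
    have : M / g * (g * ‖x‖ ^ 2) ≤ M / g * ∑ i, x i ^ 2 :=
      mul_le_mul_of_nonpos_left h4 (div_nonpos_of_nonpos_of_nonneg hlt.le hgpos.le)
    calc M * ‖x‖ ^ 2 = M / g * (g * ‖x‖ ^ 2) := by field_simp
      _ ≤ _ := this
  calc _ ≤ _ := h3.trans h5
    _ = _ := by ring

lemma aux_sum {g : ℕ} (hg : 1 ≤ g) (A : Fin g → Fin g → ℝ)
    (hA : ∀ x : Fin g → ℝ, x ≠ 0 → ∑ i, ∑ j, A i j * x i * x j < 0) (R : ℝ) :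
    Summable fun m : Fin g → ℤ =>
      Real.exp ((1 / 2) * ∑ i, ∑ j, A i j * (m i : ℝ) * (m j : ℝ) + R * ∑ i, |(m i : ℝ)|) := by
  obtain ⟨c, hc, h⟩ := aux_neg hg A hA
  have h1 := aux_prod (f := fun n : ℤ => Real.exp ((R + 1) ^ 2 / (2 * c)) * Real.exp (-|(n : ℝ)|))
    (fun n => by positivity) (aux_exp.mul_left _) g
  refine Summable.of_nonneg_of_le (fun _ => by positivity) (fun m => ?_) h1
  simp only [← Real.exp_add]
  rw [← Real.exp_sum]
  apply Real.exp_le_exp.2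
  have h2 := h fun i => (m i : ℝ)
  have h3 : ∑ i, (-(c / 2) * (m i : ℝ) ^ 2 + R * |(m i : ℝ)|)
      ≤ ∑ i, ((R + 1) ^ 2 / (2 * c) + -|(m i : ℝ)|) := by
    refine Finset.sum_le_sum fun i _ => ?_
    rw [← sq_abs]
    set t := |(m i : ℝ)|
    have : (R + 1) ^ 2 / (2 * c) + -t - (-(c / 2) * t ^ 2 + R * t)
        = (c * t - (R + 1)) ^ 2 / (2 * c) := by
      field_simp
      ring
    have h4 : 0 ≤ (c * t - (R + 1)) ^ 2 / (2 * c) := by positivity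
    linarith
  rw [Finset.sum_add_distrib, ← Finset.mul_sum, ← Finset.mul_sum] at h3
  linarith

/-- The linear form attached to an integer vector. -/
def auxL {g : ℕ} (m : Fin g → ℤ) : (Fin g → ℂ) →L[ℂ] ℂ :=
  ∑ i, (m i : ℂ) • ContinuousLinearMap.proj i

lemma auxL_apply {g : ℕ} (m : Fin g → ℤ) (z : Fin g → ℂ) :
    auxL m z = pairC (fun i => (m i : ℂ)) z := by
  simp [auxL, pairC]

lemma auxL_apply_norm {g : ℕ} (m : Fin g → ℤ) (z : Fin g → ℂ) :
    ‖auxL m z‖ ≤ (∑ i, |(m i : ℝ)|) * ‖z‖ := by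
  rw [auxL_apply, pairC, Finset.sum_mul]
  refine (norm_sum_le _ _).trans (Finset.sum_le_sum fun i _ => ?_)
  rw [norm_mul, Complex.norm_intCast]
  gcongr
  exact norm_le_pi_norm z i

lemma auxL_norm {g : ℕ} (m : Fin g → ℤ) : ‖auxL m‖ ≤ ∑ i, |(m i : ℝ)| :=
  ContinuousLinearMap.opNorm_le_bound _ (by positivity) (auxL_apply_norm m)

lemma aux_re {g : ℕ} (B : Matrix (Fin g) (Fin g) ℂ) (m : Fin g → ℤ) :
    ((1 / 2) * pairC (B.mulVec (fun i => (m i : ℂ))) (fun i => (m i : ℂ))).re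
      = (1 / 2) * ∑ i, ∑ j, (B i j).re * (m i : ℝ) * (m j : ℝ) := by
  have : ((1 : ℂ) / 2) = ((1 / 2 : ℝ) : ℂ) := by push_cast; rfl
  rw [this, Complex.re_ofReal_mul, pairC, Complex.re_sum]
  congr 1
  refine Finset.sum_congr rfl fun i _ => ?_
  simp only [Matrix.mulVec, dotProduct, Finset.sum_mul, Complex.re_sum]
  refine Finset.sum_congr rfl fun j _ => ?_
  simp
  ring

lemma aux_bound {g : ℕ} (B : Matrix (Fin g) (Fin g) ℂ) (z : Fin g → ℂ) (m : Fin g → ℤ) :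
    ‖Complex.exp ((1 / 2) * pairC (B.mulVec (fun i => (m i : ℂ))) (fun i => (m i : ℂ))
            + pairC (fun i => (m i : ℂ)) z)‖ ≤
    Real.exp ((1 / 2) * ∑ i, ∑ j, (B i j).re * (m i : ℝ) * (m j : ℝ)
      + ‖z‖ * ∑ i, |(m i : ℝ)|) := by
  rw [Complex.norm_exp, Complex.add_re, aux_re]
  gcongr
  rw [← auxL_apply, mul_comm]
  exact (Complex.re_le_norm _).trans (auxL_apply_norm m z)

/-- the theta series converges absolutely for every `z`, and the theta
function is holomorphic (analytic) on all of `ℂ^g`. -/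
theorem stmt_0 {g : ℕ} (hg : 1 ≤ g) (B : Matrix (Fin g) (Fin g) ℂ)
    (hBsymm : B.IsSymm)
    (hBneg : ∀ x : Fin g → ℝ, x ≠ 0 → ∑ i, ∑ j, (B i j).re * x i * x j < 0) :
    (∀ z : Fin g → ℂ,
      Summable fun m : Fin g → ℤ =>
        ‖Complex.exp ((1 / 2) * pairC (B.mulVec (fun i => (m i : ℂ))) (fun i => (m i : ℂ))
            + pairC (fun i => (m i : ℂ)) z)‖) ∧
    (∀ z : Fin g → ℂ, AnalyticAt ℂ (theta B) z) := by
  have hs := aux_sum hg (fun i j => (B i j).re) hBneg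
  refine ⟨fun z => Summable.of_nonneg_of_le (fun _ => norm_nonneg _) (aux_bound B z) (hs ‖z‖),
    fun z => ?_⟩
  have h := aux_analytic (fun m : Fin g → ℤ =>
    Complex.exp ((1 / 2) * pairC (B.mulVec (fun i => (m i : ℂ))) (fun i => (m i : ℂ))
            + pairC (fun i => (m i : ℂ)) z)) auxL (by
    refine Summable.of_nonneg_of_le (fun _ => by positivity) (fun m => ?_) (hs (‖z‖ + 1))
    refine (mul_le_mul (aux_bound B z m) (Real.exp_le_exp.2 (auxL_norm m))
      (Real.exp_nonneg _) (Real.exp_nonneg _)).trans_eq ?_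
    rw [← Real.exp_add]
    congr 1
    ring)
  have h2 : AnalyticAt ℂ (fun w : Fin g → ℂ => w - z) z := analyticAt_id.sub analyticAt_const
  have h3 := AnalyticAt.comp_of_eq h h2 (sub_self z)
  convert h3 using 1
  funext w
  simp only [theta, Function.comp]
  refine tsum_congr fun m => ?_
  rw [← Complex.exp_add, map_sub, auxL_apply, auxL_apply]
  congr 1
  ring
end
end

section
/- Suppose in addition that conj(B) = B − 2πi H for some symmetric g×g matrix H with integer entries. Then for every z ∈ ℂ^g, conj(Θ(z)) = Θ(conj(z) − iπ diag(H)), where diag(H) ∈ ℤ^g is the vector of diagonal entries of H and conj denotes componentwise complex conjugation. -/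
open Complex ComplexConjugate

noncomputable section

theorem even_aux {g : ℕ} (H : Matrix (Fin g) (Fin g) ℤ) (hH : H.IsSymm) (m : Fin g → ℤ)
    (s : Finset (Fin g)) :
    ∃ k : ℤ, ∑ i ∈ s, ∑ j ∈ s, H i j * m j * m i = ∑ i ∈ s, m i * H i i + 2 * k := by
  classical
  induction s using Finset.induction_on with
  | empty => exact ⟨0, by simp⟩
  | insert a s ha ih =>
    obtain ⟨k, hk⟩ := ih
    obtain ⟨l, hl⟩ := (Int.even_mul_succ_self (m a - 1))
    have hc : ∑ i ∈ s, H i a * m a * m i = ∑ j ∈ s, H a j * m j * m a := by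
      refine Finset.sum_congr rfl fun i _ => ?_
      rw [hH.apply a i]; ring
    refine ⟨k + ∑ j ∈ s, H a j * m j * m a + H a a * l, ?_⟩
    simp only [Finset.sum_insert ha, Finset.sum_add_distrib, hk, hc]
    linear_combination (H a a) * hl

/-- if `conj(B) = B − 2πiH` for a symmetric integer matrix `H`, then
`conj(Θ(z)) = Θ(conj(z) − iπ diag(H))`. -/
theorem stmt_5 {g : ℕ} (hg : 1 ≤ g) (B : Matrix (Fin g) (Fin g) ℂ)
    (hBsymm : B.IsSymm)
    (hBneg : ∀ x : Fin g → ℝ, x ≠ 0 → ∑ i, ∑ j, (B i j).re * x i * x j < 0)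
    (H : Matrix (Fin g) (Fin g) ℤ) (hHsymm : H.IsSymm)
    (hBH : ∀ i j, conj (B i j) = B i j - 2 * (Real.pi : ℂ) * I * (H i j : ℂ))
    (z : Fin g → ℂ) :
    conj (theta B z)
      = theta B (fun i => conj (z i) - (Real.pi : ℂ) * I * (H i i : ℂ)) := by
  unfold theta
  have hstar : ∀ f : (Fin g → ℤ) → ℂ, conj (∑' m, f m) = ∑' m, conj (f m) := fun f => tsum_star
  rw [hstar]
  refine tsum_congr fun m => ?_
  obtain ⟨k, hk⟩ := even_aux H hHsymm m Finset.univ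
  have hk' : ∑ i, ∑ j, (H i j : ℂ) * m j * m i = ∑ i, (m i : ℂ) * H i i + 2 * k := by
    exact_mod_cast hk
  rw [← Complex.exp_conj, Complex.exp_eq_exp_iff_exists_int]
  refine ⟨-k, ?_⟩
  have h1 : conj (pairC (B.mulVec (fun i => (m i : ℂ))) (fun i => (m i : ℂ)))
      = pairC (B.mulVec (fun i => (m i : ℂ))) (fun i => (m i : ℂ))
        - 2 * (Real.pi : ℂ) * I * ∑ i, ∑ j, (H i j : ℂ) * m j * m i := by
    simp only [pairC, Matrix.mulVec, dotProduct, map_sum, map_mul, hBH, map_intCast,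
      Finset.mul_sum, Finset.sum_mul, ← Finset.sum_sub_distrib]
    refine Finset.sum_congr rfl fun i _ => Finset.sum_congr rfl fun j _ => ?_
    ring
  have h2 : pairC (fun i => (m i : ℂ)) (fun i => conj (z i) - (Real.pi : ℂ) * I * (H i i : ℂ))
      = conj (pairC (fun i => (m i : ℂ)) z) - (Real.pi : ℂ) * I * ∑ i, (m i : ℂ) * H i i := by
    simp only [pairC, map_sum, map_mul, map_intCast,
      Finset.mul_sum, ← Finset.sum_sub_distrib]
    refine Finset.sum_congr rfl fun i _ => ?_
    ring
  rw [map_add, map_mul, h1, h2, hk']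
  have h3 : conj (1 / 2 : ℂ) = 1 / 2 := by rw [map_div₀, map_one, map_ofNat]
  rw [h3]
  push_cast
  ring
end
end

section
/- Assume the degenerate Fay identity holds for the data (V_a, W_a, r, K₁(a,b), K₂(a,b)) and for the data (V_b, W_b, −r, K₁(b,a), K₂(b,a)), and the bilinear Fay identity holds for (V_a, V_b, r, q₁, q₂). Let κ₁, κ₂, A ∈ ℂ∖{0}, h ∈ ℂ, d ∈ ℂ^g. Set Z(ξ,η,t) = i(κ₁V_aξ − κ₂V_bη + (κ₁²W_a − κ₂²W_b)t/2), G₁ = κ₁K₁(a,b), G₂ = κ₂K₁(b,a), G₃ = κ₁²K₂(a,b) + κ₂²K₂(b,a) + h, and define ψ = A·Θ(Z−d+r)/Θ(Z−d)·exp(i(−G₁ξ − G₂η + G₃t/2)), ψ* = −(κ₁κ₂q₂/A)·Θ(Z−d−r)/Θ(Z−d)·exp(i(G₁ξ + G₂η − G₃t/2)), φ = (1/2)(lnΘ(Z−d))_{ξξ} + (1/2)(lnΘ(Z−d))_{ηη} + h/4, where (lnΘ(Z−d))_{ξξ} denotes ∂_ξ(∂_ξΘ(Z−d)/Θ(Z−d))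 and similarly for η. Then on the open set of (ξ,η,t) ∈ ℂ³ where Θ(Z−d) ≠ 0, with subscripts denoting complex partial derivatives, the complexified Davey–Stewartson system holds: iψ_t + (1/2)(ψ_{ξξ} + ψ_{ηη}) + 2φψ = 0; −iψ*_t + (1/2)(ψ*_{ξξ} + ψ*_{ηη}) + 2φψ* = 0; φ_{ξη} + (1/2)((ψψ*)_{ξξ} + (ψψ*)_{ηη}) = 0. -/
open Complex ComplexConjugate

noncomputable section

/-- First logarithmic directional derivative `D_V ln F (z) = D_V F(z) / F(z)`. -/
def logD {g : ℕ} (V : Fin g → ℂ) (F : (Fin g → ℂ) → ℂ) (z : Fin g → ℂ) : ℂ :=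
  fderiv ℂ F z V / F z

/-- Second logarithmic directional derivative `D_V² ln F (z) = D_V (D_V ln F) (z)`. -/
def logD2 {g : ℕ} (V : Fin g → ℂ) (F : (Fin g → ℂ) → ℂ) (z : Fin g → ℂ) : ℂ :=
  fderiv ℂ (logD V F) z V

/-- The degenerate Fay identity for the data `(V, W, r, K₁, K₂)`. -/
def DegFay {g : ℕ} (B : Matrix (Fin g) (Fin g) ℂ) (V W r : Fin g → ℂ)
    (K₁ K₂ : ℂ) : Prop :=
  ∀ z : Fin g → ℂ, theta B z ≠ 0 → theta B (z + r) ≠ 0 →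
    logD W (fun w => theta B (w + r) / theta B w) z
      + logD2 V (fun w => theta B (w + r) / theta B w) z
      + (logD V (fun w => theta B (w + r) / theta B w) z - K₁) ^ 2
      + 2 * logD2 V (theta B) z + K₂ = 0

/-- The bilinear (degenerate Fay) identity for the data `(V, V', r, q₁, q₂)`:
`D_V D_{V'} ln Θ(z) = q₁ + q₂ Θ(z+r)Θ(z−r)/Θ(z)²`. -/
def BilinFay {g : ℕ} (B : Matrix (Fin g) (Fin g) ℂ) (V V' r : Fin g → ℂ)
    (q₁ q₂ : ℂ) : Prop :=
  ∀ z : Fin g → ℂ, theta B z ≠ 0 →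
    fderiv ℂ (logD V' (theta B)) z V
      = q₁ + q₂ * theta B (z + r) * theta B (z - r) / (theta B z) ^ 2

open Topology Filter

/-- ℓ¹ size of an integer vector. -/
def sz {g : ℕ} (m : Fin g → ℤ) : ℝ := ∑ i, |(m i : ℝ)|

lemma sz_nonneg {g : ℕ} (m : Fin g → ℤ) : 0 ≤ sz m := by
  unfold sz; positivity

lemma summable_pi_prod {g : ℕ} (f : ℤ → ℝ) (hf : ∀ n, 0 ≤ f n) (hs : Summable f) :
    Summable (fun m : Fin g → ℤ => ∏ i, f (m i)) := by
  classical
  refine summable_of_sum_le (c := ∏ _i : Fin g, ∑' n, f n)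
    (fun m => Finset.prod_nonneg fun i _ => hf _) ?_
  intro u
  have hsub : u ⊆ Fintype.piFinset (fun i => u.image (fun m => m i)) := by
    intro m hm
    rw [Fintype.mem_piFinset]
    intro i
    exact Finset.mem_image_of_mem _ hm
  calc ∑ m ∈ u, ∏ i, f (m i)
      ≤ ∑ m ∈ Fintype.piFinset (fun i => u.image (fun m => m i)), ∏ i, f (m i) :=
        Finset.sum_le_sum_of_subset_of_nonneg hsub
          (fun m _ _ => Finset.prod_nonneg fun i _ => hf _)
    _ = ∏ i, ∑ n ∈ u.image (fun m => m i), f n := by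
        rw [Finset.prod_univ_sum]
    _ ≤ ∏ _i : Fin g, ∑' n, f n := by
        refine Finset.prod_le_prod (fun i _ => Finset.sum_nonneg fun n _ => hf n) ?_
        intro i _
        exact hs.sum_le_tsum _ (fun n _ => hf n)

lemma summable_exp_neg_sz {g : ℕ} : Summable (fun m : Fin g → ℤ => Real.exp (-sz m)) := by
  have h1 : Summable (fun n : ℤ => Real.exp (-|(n : ℝ)|)) := by
    apply Summable.of_nat_of_neg
    · simpa using Real.summable_exp_neg_nat
    · simpa using Real.summable_exp_neg_nat
  have := summable_pi_prod (g := g) _ (fun n => (Real.exp_pos _).le) h1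
  refine this.congr fun m => ?_
  rw [sz, ← Real.exp_sum, Finset.sum_neg_distrib]

/-- Rapidly decaying coefficients. -/
def Rapid {g : ℕ} (c : (Fin g → ℤ) → ℂ) : Prop :=
  ∀ R : ℝ, Summable (fun m => ‖c m‖ * Real.exp (R * sz m))

lemma neg_form_bound {g : ℕ} (M : Fin g → Fin g → ℝ)
    (hM : ∀ x : Fin g → ℝ, x ≠ 0 → ∑ i, ∑ j, M i j * x i * x j < 0) :
    ∃ δ > 0, ∀ x : Fin g → ℝ, ∑ i, ∑ j, M i j * x i * x j ≤ -δ * (∑ i, |x i|) ^ 2 := by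
  let Q : (Fin g → ℝ) → ℝ := fun x => ∑ i, ∑ j, M i j * x i * x j
  let N : (Fin g → ℝ) → ℝ := fun x => ∑ i, |x i|
  have hQc : Continuous Q := by fun_prop
  have hNc : Continuous N := by fun_prop
  have hNpos : ∀ x, x ≠ 0 → 0 < N x := by
    intro x hx
    obtain ⟨i, hi⟩ := Function.ne_iff.mp hx
    exact Finset.sum_pos' (fun j _ => abs_nonneg _) ⟨i, Finset.mem_univ _, abs_pos.mpr hi⟩
  have hK : IsCompact {x | N x = 1} := by
    refine (isCompact_closedBall (0 : Fin g → ℝ) 1).of_isClosed_subset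
      (isClosed_eq hNc continuous_const) ?_
    intro x hx
    rw [mem_closedBall_zero_iff, pi_norm_le_iff_of_nonneg zero_le_one]
    intro i
    have : |x i| ≤ N x := Finset.single_le_sum (f := fun i => |x i|)
      (fun j _ => abs_nonneg _) (Finset.mem_univ i)
    rw [Set.mem_ofPred_eq] at hx
    rw [Real.norm_eq_abs]; linarith
  have hscale : ∀ (c : ℝ) x, Q (c • x) = c ^ 2 * Q x := by
    intro c x
    simp only [Q, Pi.smul_apply, smul_eq_mul, Finset.mul_sum]
    refine Finset.sum_congr rfl fun i _ => Finset.sum_congr rfl fun j _ => by ring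
  have hNscale : ∀ (c : ℝ) x, N (c • x) = |c| * N x := by
    intro c x
    simp only [N, Pi.smul_apply, smul_eq_mul, Finset.mul_sum, abs_mul]
  have key : ∃ δ > 0, ∀ x, N x = 1 → Q x ≤ -δ := by
    rcases Set.eq_empty_or_nonempty {x | N x = 1} with he | hne
    · refine ⟨1, one_pos, fun x hx => ?_⟩
      have : x ∈ ({x | N x = 1} : Set _) := hx
      rw [he] at this; exact this.elim
    · obtain ⟨x0, hx0, hmax⟩ := hK.exists_isMaxOn hne hQc.continuousOn
      have hx0' : N x0 = 1 := hx0
      have hne0 : x0 ≠ 0 := by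
        rintro rfl
        simp [N] at hx0'
      refine ⟨-Q x0, by have := hM x0 hne0; simpa [Q] using this, fun x hx => ?_⟩
      rw [neg_neg]; exact hmax hx
  obtain ⟨δ, hδ, hb⟩ := key
  refine ⟨δ, hδ, fun x => ?_⟩
  change Q x ≤ -δ * (N x) ^ 2
  by_cases hx : x = 0
  · subst hx; simp [Q, N]
  · have hp := hNpos x hx
    have h1 : N ((N x)⁻¹ • x) = 1 := by
      rw [hNscale, abs_of_pos (inv_pos.mpr hp), inv_mul_cancel₀ hp.ne']
    have h2 := hb _ h1
    rw [hscale] at h2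
    have h3 : Q x = (N x) ^ 2 * ((N x)⁻¹ ^ 2 * Q x) := by
      field_simp
    rw [h3]
    nlinarith [sq_nonneg (N x)]

lemma gauss_rapid {g : ℕ} (B : Matrix (Fin g) (Fin g) ℂ)
    (hBneg : ∀ x : Fin g → ℝ, x ≠ 0 → ∑ i, ∑ j, (B i j).re * x i * x j < 0) :
    Rapid (fun m : Fin g → ℤ =>
      Complex.exp ((1 / 2) * pairC (B.mulVec (fun i => (m i : ℂ))) (fun i => (m i : ℂ)))) := by
  obtain ⟨δ, hδ, hb⟩ := neg_form_bound (fun i j => (B i j).re) hBneg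
  intro R
  refine Summable.of_nonneg_of_le (fun m => by positivity) (fun m => ?_)
    ((summable_exp_neg_sz (g := g)).mul_left (Real.exp ((R + 1) ^ 2 / (2 * δ))))
  rw [Complex.norm_exp, ← Real.exp_add, ← Real.exp_add]
  apply Real.exp_le_exp.mpr
  have h1 : ((1 / 2 : ℂ) * pairC (B.mulVec (fun i => (m i : ℂ))) (fun i => (m i : ℂ))).re
      = (1 / 2) * ∑ i, ∑ j, (B i j).re * (m i : ℝ) * (m j : ℝ) := by
    have : (1 / 2 : ℂ) = ((1 / 2 : ℝ) : ℂ) := by push_cast; rfl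
    rw [this, Complex.re_ofReal_mul]
    congr 1
    simp only [pairC, Matrix.mulVec, dotProduct, Finset.sum_mul, Complex.re_sum]
    refine Finset.sum_congr rfl fun i _ => Finset.sum_congr rfl fun j _ => ?_
    have : B i j * (m j : ℂ) * (m i : ℂ) = B i j * (((m i : ℝ) * (m j : ℝ) : ℝ) : ℂ) := by
      push_cast; ring
    rw [this, Complex.re_mul_ofReal]; ring
  rw [h1]
  have h2 := hb (fun i => (m i : ℝ))
  have h3 : (∑ i, |(m i : ℝ)|) = sz m := rfl
  rw [h3] at h2
  have h4 : (R + 1) * sz m - δ / 2 * sz m ^ 2 ≤ (R + 1) ^ 2 / (2 * δ) := by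
    rw [le_div_iff₀ (by positivity)]
    nlinarith [sq_nonneg (δ * sz m - (R + 1))]
  linarith

lemma Rapid.mul_coord {g : ℕ} {c : (Fin g → ℤ) → ℂ} (hc : Rapid c) (i : Fin g) :
    Rapid (fun m => c m * (m i : ℂ)) := by
  intro R
  refine Summable.of_nonneg_of_le (fun m => by positivity) (fun m => ?_) (hc (R + 1))
  have h1 : |(m i : ℝ)| ≤ sz m := Finset.single_le_sum (f := fun i => |(m i : ℝ)|)
      (fun j _ => abs_nonneg _) (Finset.mem_univ i)
  have h2 : |(m i : ℝ)| ≤ Real.exp (sz m) := h1.trans (by linarith [Real.add_one_le_exp (sz m)])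
  have h3 : ‖(m i : ℂ)‖ = |(m i : ℝ)| := by
    rw [Complex.norm_intCast]
  rw [norm_mul, h3, add_mul, Real.exp_add, one_mul, mul_assoc]
  refine mul_le_mul_of_nonneg_left ?_ (norm_nonneg _)
  rw [mul_comm]
  exact mul_le_mul_of_nonneg_left h2 (Real.exp_pos _).le

/-- general theta-like series -/
def ser {g : ℕ} (c : (Fin g → ℤ) → ℂ) (z : Fin g → ℂ) : ℂ :=
  ∑' m : Fin g → ℤ, c m * Complex.exp (∑ i, (m i : ℂ) * z i)

/-- linear functional attached to m -/
def lin {g : ℕ} (m : Fin g → ℤ) : (Fin g → ℂ) →L[ℂ] ℂ :=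
  ∑ i, (m i : ℂ) • ContinuousLinearMap.proj (R := ℂ) (φ := fun _ : Fin g => ℂ) i

lemma lin_apply {g : ℕ} (m : Fin g → ℤ) (z : Fin g → ℂ) : lin m z = ∑ i, (m i : ℂ) * z i := by
  simp [lin]

lemma norm_lin_apply {g : ℕ} (m : Fin g → ℤ) (z : Fin g → ℂ) : ‖lin m z‖ ≤ sz m * ‖z‖ := by
  rw [lin_apply, sz, Finset.sum_mul]
  refine (norm_sum_le _ _).trans (Finset.sum_le_sum fun i _ => ?_)
  rw [norm_mul, Complex.norm_intCast]
  gcongr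
  exact norm_le_pi_norm z i

lemma norm_lin {g : ℕ} (m : Fin g → ℤ) : ‖lin m‖ ≤ sz m :=
  ContinuousLinearMap.opNorm_le_bound _ (sz_nonneg m) (norm_lin_apply m)

lemma norm_exp_lin {g : ℕ} (m : Fin g → ℤ) (z : Fin g → ℂ) {R : ℝ} (hz : ‖z‖ ≤ R) :
    ‖Complex.exp (lin m z)‖ ≤ Real.exp (R * sz m) := by
  rw [Complex.norm_exp]
  apply Real.exp_le_exp.mpr
  refine (Complex.re_le_norm _).trans ((norm_lin_apply m z).trans ?_)
  rw [mul_comm]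
  exact mul_le_mul_of_nonneg_right hz (sz_nonneg m)

lemma ser_summable {g : ℕ} {c : (Fin g → ℤ) → ℂ} (hc : Rapid c) (z : Fin g → ℂ) :
    Summable (fun m => c m * Complex.exp (lin m z)) := by
  refine Summable.of_norm_bounded (hc ‖z‖) fun m => ?_
  rw [norm_mul]
  gcongr
  exact norm_exp_lin m z le_rfl

lemma ser_hasFDerivAt {g : ℕ} {c : (Fin g → ℤ) → ℂ} (hc : Rapid c) (z : Fin g → ℂ) :
    HasFDerivAt (ser c) (∑' m, (c m * Complex.exp (lin m z)) • lin m) z := by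
  have hser : ser c = fun z => ∑' m, c m * Complex.exp (lin m z) := by
    funext w; simp only [ser, lin_apply]
  rw [hser]
  refine hasFDerivAt_tsum_of_isPreconnected (hc (‖z‖ + 1 + 1)) (s := Metric.ball 0 (‖z‖ + 1))
    (f := fun m w => c m * Complex.exp (lin m w))
    (f' := fun m w => (c m * Complex.exp (lin m w)) • lin m) (x₀ := z)
    Metric.isOpen_ball (convex_ball _ _).isPreconnected ?_ ?_ (by simp) (ser_summable hc z) (by simp)
  · intro m w _
    have := ((lin m).hasFDerivAt (x := w)).cexp.const_mul (c m)
    rwa [smul_smul] at this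
  · intro m w hw
    have hw' : ‖w‖ ≤ ‖z‖ + 1 := by
      rw [mem_ball_zero_iff] at hw; exact hw.le
    have h2 : sz m ≤ Real.exp (sz m) := by linarith [Real.add_one_le_exp (sz m)]
    rw [norm_smul, norm_mul, add_mul _ 1, Real.exp_add, one_mul, mul_assoc]
    have := norm_exp_lin m w hw'
    have := norm_lin m
    gcongr
    linarith

lemma ser_fderiv_apply {g : ℕ} {c : (Fin g → ℤ) → ℂ} (hc : Rapid c) (z : Fin g → ℂ)
    (v : Fin g → ℂ) :
    fderiv ℂ (ser c) z v = ∑ i, v i * ser (fun m => c m * (m i : ℂ)) z := by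
  have hsum : Summable (fun m => (c m * Complex.exp (lin m z)) • lin m) := by
    refine Summable.of_norm_bounded (hc (‖z‖ + 1)) fun m => ?_
    have h2 : sz m ≤ Real.exp (sz m) := by linarith [Real.add_one_le_exp (sz m)]
    rw [norm_smul, norm_mul, add_mul _ 1, Real.exp_add, one_mul, mul_assoc]
    have := norm_exp_lin m z le_rfl
    have := norm_lin m
    gcongr
    linarith
  rw [(ser_hasFDerivAt hc z).fderiv]
  have h1 : (∑' m, (c m * Complex.exp (lin m z)) • lin m) v
      = ∑' m, ((c m * Complex.exp (lin m z)) • lin m) v :=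
    (ContinuousLinearMap.apply ℂ ℂ v).map_tsum hsum
  rw [h1]
  have h2 : ∀ i, v i * ser (fun m => c m * (m i : ℂ)) z
      = ∑' m, v i * (c m * (m i : ℂ) * Complex.exp (lin m z)) := by
    intro i
    rw [tsum_mul_left]
    simp only [ser, lin_apply]
  simp only [h2]
  rw [← Summable.tsum_finsetSum fun i _ => (ser_summable (hc.mul_coord i) z).mul_left (v i)]
  refine tsum_congr fun m => ?_
  rw [_root_.smul_apply, smul_eq_mul]
  conv_lhs => rw [lin_apply m v]
  rw [Finset.mul_sum]
  refine Finset.sum_congr rfl fun i _ => by ring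

lemma ser_contDiff_nat {g : ℕ} (n : ℕ) : ∀ {c : (Fin g → ℤ) → ℂ}, Rapid c →
    ContDiff ℂ n (ser c) := by
  induction n with
  | zero =>
    intro c hc
    have : Differentiable ℂ (ser c) := fun z => (ser_hasFDerivAt hc z).differentiableAt
    exact contDiff_zero.mpr this.continuous
  | succ n ih =>
    intro c hc
    have hd : Differentiable ℂ (ser c) := fun z => (ser_hasFDerivAt hc z).differentiableAt
    have := (contDiff_succ_iff_fderiv_apply (𝕜 := ℂ) (n := (n : WithTop ℕ∞)) (f := ser c)).mpr
      ⟨hd, by simp, fun v => by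
        have : (fun z => fderiv ℂ (ser c) z v)
            = fun z => ∑ i, v i * ser (fun m => c m * (m i : ℂ)) z := by
          funext z; exact ser_fderiv_apply hc z v
        rw [this]
        exact ContDiff.sum fun i _ => contDiff_const.mul (ih (hc.mul_coord i))⟩
    exact_mod_cast this

lemma theta_contDiff {g : ℕ} (B : Matrix (Fin g) (Fin g) ℂ)
    (hBneg : ∀ x : Fin g → ℝ, x ≠ 0 → ∑ i, ∑ j, (B i j).re * x i * x j < 0) :
    ContDiff ℂ (⊤ : ℕ∞) (theta B) := by
  have h1 : theta B = ser (fun m : Fin g → ℤ =>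
      Complex.exp ((1 / 2) * pairC (B.mulVec (fun i => (m i : ℂ))) (fun i => (m i : ℂ)))) := by
    funext z
    simp only [theta, ser, Complex.exp_add]
    rfl
  rw [h1]
  exact contDiff_infty.mpr fun n => ser_contDiff_nat n (gauss_rapid B hBneg)

section calculus

variable {E : Type*} [NormedAddCommGroup E] [NormedSpace ℂ E]

/-- directional derivative -/
def dd (V : E) (F : E → ℂ) (z : E) : ℂ := fderiv ℂ F z V

lemma dd_smooth {U : Set E} (hU : IsOpen U) {F : E → ℂ} (hF : ContDiffOn ℂ (⊤ : ℕ∞) F U) (V : E) :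
    ContDiffOn ℂ (⊤ : ℕ∞) (dd V F) U := by
  have h1 : ContDiffOn ℂ (⊤ : ℕ∞) (fderiv ℂ F) U := hF.fderiv_of_isOpen hU (by simp)
  exact h1.clm_apply contDiffOn_const

lemma smooth_diffAt {U : Set E} (hU : IsOpen U) {F : E → ℂ} (hF : ContDiffOn ℂ (⊤ : ℕ∞) F U)
    {z : E} (hz : z ∈ U) : DifferentiableAt ℂ F z :=
  (hF.differentiableOn (by simp)).differentiableAt (hU.mem_nhds hz)

lemma dd_congr {U : Set E} (hU : IsOpen U) {F G : E → ℂ} (h : ∀ z ∈ U, F z = G z) (V : E) :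
    ∀ z ∈ U, dd V F z = dd V G z := by
  intro z hz
  have : F =ᶠ[𝓝 z] G := by
    filter_upwards [hU.mem_nhds hz] with w hw using h w hw
  rw [dd, dd, this.fderiv_eq]

lemma dd_comm {U : Set E} (hU : IsOpen U) {F : E → ℂ} (hF : ContDiffOn ℂ (⊤ : ℕ∞) F U)
    (V W : E) : ∀ z ∈ U, dd V (dd W F) z = dd W (dd V F) z := by
  intro z hz
  have hs : IsSymmSndFDerivAt ℂ F z :=
    ((hF.contDiffAt (hU.mem_nhds hz))).isSymmSndFDerivAt (by
      simp only [minSmoothness_of_isRCLikeNormedField]; exact WithTop.coe_le_coe.mpr (le_top : (2 : ℕ∞) ≤ ⊤))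
  have h1 : DifferentiableAt ℂ (fderiv ℂ F) z :=
    ((hF.fderiv_of_isOpen (m := (⊤ : ℕ∞)) hU (by simp)).differentiableOn
      (by simp)).differentiableAt (hU.mem_nhds hz)
  have h2 : ∀ W V : E, dd V (dd W F) z = fderiv ℂ (fderiv ℂ F) z V W := by
    intro W V
    have : HasFDerivAt (dd W F) _ z := h1.hasFDerivAt.clm_apply (hasFDerivAt_const W z)
    rw [dd, this.fderiv]
    simp
  rw [h2, h2, hs.eq]

lemma dd_add {F G : E → ℂ} {z : E} (hF : DifferentiableAt ℂ F z) (hG : DifferentiableAt ℂ G z)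
    (V : E) : dd V (fun w => F w + G w) z = dd V F z + dd V G z := by
  have := hF.hasFDerivAt.add hG.hasFDerivAt
  unfold dd
  rw [HasFDerivAt.fderiv (f := fun w => F w + G w) this]; rfl

lemma dd_const_mul {F : E → ℂ} {z : E} (hF : DifferentiableAt ℂ F z) (c : ℂ)
    (V : E) : dd V (fun w => c * F w) z = c * dd V F z := by
  unfold dd
  rw [(hF.hasFDerivAt.const_mul c).fderiv]; rfl

lemma dd_div {F G : E → ℂ} {z : E} (hF : DifferentiableAt ℂ F z) (hG : DifferentiableAt ℂ G z)
    (h0 : G z ≠ 0) (V : E) :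
    dd V (fun w => F w / G w) z = (dd V F z * G z - F z * dd V G z) / G z ^ 2 := by
  have h1 : HasFDerivAt (fun w => F w * (G w)⁻¹) _ z :=
    hF.hasFDerivAt.mul (hasFDerivAt_inv' h0 |>.comp z hG.hasFDerivAt)
  have h2 : (fun w => F w / G w) = fun w => F w * (G w)⁻¹ := by
    funext w; rw [div_eq_mul_inv]
  unfold dd
  rw [h2, h1.fderiv]
  simp
  field_simp
  ring

lemma dd_mul {F G : E → ℂ} {z : E} (hF : DifferentiableAt ℂ F z) (hG : DifferentiableAt ℂ G z)
    (V : E) :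
    dd V (fun w => F w * G w) z = dd V F z * G z + F z * dd V G z := by
  have h1 : HasFDerivAt (fun w => F w * G w) _ z := hF.hasFDerivAt.mul hG.hasFDerivAt
  unfold dd
  rw [h1.fderiv]
  simp
  ring

lemma dd_sub {F G : E → ℂ} {z : E} (hF : DifferentiableAt ℂ F z) (hG : DifferentiableAt ℂ G z)
    (V : E) : dd V (fun w => F w - G w) z = dd V F z - dd V G z := by
  have := hF.hasFDerivAt.sub hG.hasFDerivAt
  unfold dd
  rw [HasFDerivAt.fderiv (f := fun w => F w - G w) this]; rfl

lemma dd_shift (F : E → ℂ) (r V : E) : dd V (fun w => F (w + r)) = fun z => dd V F (z + r) := by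
  funext z
  unfold dd
  rw [fderiv_comp_add_right]

/-- second derivative of a quotient -/
lemma dd2_div {U : Set E} (hU : IsOpen U) {F G : E → ℂ} (hF : ContDiffOn ℂ (⊤ : ℕ∞) F U)
    (hG : ContDiffOn ℂ (⊤ : ℕ∞) G U) (h0 : ∀ z ∈ U, G z ≠ 0) (V : E) :
    ∀ z ∈ U, dd V (dd V (fun w => F w / G w)) z =
      dd V (dd V F) z / G z - 2 * dd V F z * dd V G z / G z ^ 2
        - F z * dd V (dd V G) z / G z ^ 2 + 2 * F z * (dd V G z) ^ 2 / G z ^ 3 := by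
  intro z hz
  have dF := smooth_diffAt hU hF hz
  have dG := smooth_diffAt hU hG hz
  have dF1 := smooth_diffAt hU (dd_smooth hU hF V) hz
  have dG1 := smooth_diffAt hU (dd_smooth hU hG V) hz
  have hg := h0 z hz
  have e1 : ∀ w ∈ U, dd V (fun w => F w / G w) w
      = (dd V F w * G w - F w * dd V G w) / (G w * G w) := by
    intro w hw
    rw [dd_div (smooth_diffAt hU hF hw) (smooth_diffAt hU hG hw) (h0 w hw), sq]
  rw [dd_congr hU e1 V z hz,
    dd_div (F := fun w => dd V F w * G w - F w * dd V G w) (G := fun w => G w * G w)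
      ((dF1.mul dG).sub (dF.mul dG1)) (dG.mul dG) (mul_ne_zero hg hg),
    dd_sub (F := fun w => dd V F w * G w) (G := fun w => F w * dd V G w)
      (dF1.mul dG) (dF.mul dG1), dd_mul dF1 dG, dd_mul dF dG1, dd_mul dG dG]
  field_simp
  ring

/-- derivative along an affine curve, with an exponential factor -/
lemma line_deriv {U : Set E} (hU : IsOpen U) {F : E → ℂ} (hF : ContDiffOn ℂ (⊤ : ℕ∞) F U)
    (p : ℂ → E) (v : E) (hp : ∀ s, HasDerivAt p v s) (C k k0 : ℂ) (Φ : ℂ → ℂ)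
    (hΦ : ∀ s, p s ∈ U → Φ s = C * F (p s) * Complex.exp (k * s + k0)) :
    ∀ s, p s ∈ U → deriv Φ s = C * (k * F (p s) + dd v F (p s)) * Complex.exp (k * s + k0) := by
  intro s hs
  have hc : Continuous p := continuous_iff_continuousAt.mpr fun s => (hp s).continuousAt
  have he : Φ =ᶠ[𝓝 s] fun s => C * F (p s) * Complex.exp (k * s + k0) := by
    filter_upwards [(hU.preimage hc).mem_nhds hs] with w hw using hΦ w hw
  rw [he.deriv_eq]
  have h1 : HasDerivAt (fun s => F (p s)) (dd v F (p s)) s :=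
    (smooth_diffAt hU hF hs).hasFDerivAt.comp_hasDerivAt s (hp s)
  have h2 : HasDerivAt (fun s : ℂ => Complex.exp (k * s + k0)) _ s :=
    (((hasDerivAt_id s).const_mul k).add_const k0).cexp
  have h3 : HasDerivAt (fun s => C * F (p s) * Complex.exp (k * s + k0)) _ s :=
    (h1.const_mul C).mul h2
  rw [h3.deriv]
  simp only [id]
  ring

lemma line_deriv2 {U : Set E} (hU : IsOpen U) {F : E → ℂ} (hF : ContDiffOn ℂ (⊤ : ℕ∞) F U)
    (p : ℂ → E) (v : E) (hp : ∀ s, HasDerivAt p v s) (C k k0 : ℂ) (Φ : ℂ → ℂ)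
    (hΦ : ∀ s, p s ∈ U → Φ s = C * F (p s) * Complex.exp (k * s + k0)) :
    ∀ s, p s ∈ U → deriv (fun s' => deriv Φ s') s
      = C * (k ^ 2 * F (p s) + 2 * k * dd v F (p s) + dd v (dd v F) (p s))
        * Complex.exp (k * s + k0) := by
  intro s hs
  have hd := dd_smooth hU hF v
  have h1 : ContDiffOn ℂ (⊤ : ℕ∞) (fun w => k * F w + dd v F w) U :=
    (contDiffOn_const.mul hF).add hd
  rw [line_deriv hU h1 p v hp C k k0 (fun s' => deriv Φ s')
    (line_deriv hU hF p v hp C k k0 Φ hΦ) s hs,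
    dd_add (F := fun w => k * F w) ((smooth_diffAt hU hF hs).const_mul k) (smooth_diffAt hU hd hs),
    dd_const_mul (smooth_diffAt hU hF hs)]
  ring

lemma line_deriv' {U : Set E} (hU : IsOpen U) {F : E → ℂ} (hF : ContDiffOn ℂ (⊤ : ℕ∞) F U)
    (p : ℂ → E) (v : E) (hp : ∀ s, HasDerivAt p v s) (Φ : ℂ → ℂ)
    (hΦ : ∀ s, p s ∈ U → Φ s = F (p s)) :
    ∀ s, p s ∈ U → deriv Φ s = dd v F (p s) := by
  intro s hs
  have := line_deriv hU hF p v hp 1 0 0 Φ (fun s hs => by simp [hΦ s hs]) s hs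
  simpa using this

lemma line_deriv2' {U : Set E} (hU : IsOpen U) {F : E → ℂ} (hF : ContDiffOn ℂ (⊤ : ℕ∞) F U)
    (p : ℂ → E) (v : E) (hp : ∀ s, HasDerivAt p v s) (Φ : ℂ → ℂ)
    (hΦ : ∀ s, p s ∈ U → Φ s = F (p s)) :
    ∀ s, p s ∈ U → deriv (fun s' => deriv Φ s') s = dd v (dd v F) (p s) := by
  intro s hs
  have := line_deriv2 hU hF p v hp 1 0 0 Φ (fun s hs => by simp [hΦ s hs]) s hs
  simpa using this

lemma dd_smul (c : ℂ) (V : E) (F : E → ℂ) : dd (c • V) F = fun z => c * dd V F z := by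
  funext z; simp [dd]

/-- Non-vanishing points of a nonzero entire function are dense. -/
lemma dense_ne_zero {T : E → ℂ} (hT : ContDiff ℂ (⊤ : ℕ∞) T) {z0 : E} (h0 : T z0 ≠ 0) (w : E) :
    ∃ᶠ z in 𝓝 w, T z ≠ 0 := by
  rw [Filter.Frequently]
  intro hev
  have hev' : ∀ᶠ z in 𝓝 w, T z = 0 := by
    filter_upwards [hev] with z hz using not_not.mp hz
  let p : ℂ → E := fun s => w + s • (z0 - w)
  have hp : Differentiable ℂ p := by intro s; fun_prop
  have hd : Differentiable ℂ (fun s => T (p s)) := (hT.differentiable (by simp)).comp hp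
  have han : AnalyticOnNhd ℂ (fun s => T (p s)) Set.univ := fun s _ => hd.analyticAt s
  have hp0 : p 0 = w := by simp [p]
  have hz : (fun s => T (p s)) =ᶠ[𝓝 0] 0 := by
    have : Tendsto p (𝓝 0) (𝓝 w) := by
      have := hp.continuous.tendsto 0
      rwa [hp0] at this
    filter_upwards [this.eventually hev'] with s hs using hs
  have := han.eqOn_zero_of_preconnected_of_eventuallyEq_zero isPreconnected_univ
    (Set.mem_univ 0) hz (Set.mem_univ 1)
  simp [p] at this
  exact h0 this

end calculus

section fay

variable {g : ℕ}

lemma logD_eq (V : Fin g → ℂ) (F : (Fin g → ℂ) → ℂ) :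
    logD V F = fun w => dd V F w / F w := rfl

lemma logD2_eq (V : Fin g → ℂ) (F : (Fin g → ℂ) → ℂ) :
    logD2 V F = dd V (fun w => dd V F w / F w) := rfl

lemma logD2_val {U : Set (Fin g → ℂ)} (hU : IsOpen U) {F : (Fin g → ℂ) → ℂ}
    (hF : ContDiffOn ℂ (⊤ : ℕ∞) F U) (V : Fin g → ℂ) {z : Fin g → ℂ} (hz : z ∈ U) (h0 : F z ≠ 0) :
    logD2 V F z = dd V (dd V F) z / F z - (dd V F z / F z) ^ 2 := by
  rw [logD2_eq, dd_div (smooth_diffAt hU (dd_smooth hU hF V) hz) (smooth_diffAt hU hF hz) h0]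
  field_simp

/-- All the terms of the degenerate Fay identity, in terms of derivatives of theta. -/
lemma degFay_expand {T : (Fin g → ℂ) → ℂ} (hT : ContDiff ℂ (⊤ : ℕ∞) T)
    (V W r : Fin g → ℂ) (K₁ K₂ : ℂ) (z : Fin g → ℂ) (h0 : T z ≠ 0) (h1 : T (z + r) ≠ 0)
    (H : logD W (fun w => T (w + r) / T w) z
      + logD2 V (fun w => T (w + r) / T w) z
      + (logD V (fun w => T (w + r) / T w) z - K₁) ^ 2
      + 2 * logD2 V T z + K₂ = 0) :
    (dd W T (z + r) / T (z + r) - dd W T z / T z)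
    + ((dd V (dd V T) (z + r) / T (z + r) - (dd V T (z + r) / T (z + r)) ^ 2)
      - (dd V (dd V T) z / T z - (dd V T z / T z) ^ 2))
    + (dd V T (z + r) / T (z + r) - dd V T z / T z - K₁) ^ 2
    + 2 * (dd V (dd V T) z / T z - (dd V T z / T z) ^ 2) + K₂ = 0 := by
  have hTs : ContDiff ℂ (⊤ : ℕ∞) (fun w => T (w + r)) := hT.comp (contDiff_id.add contDiff_const)
  set U : Set (Fin g → ℂ) := {w | T w ≠ 0} with hUdef
  have hU : IsOpen U := isOpen_ne_fun hT.continuous continuous_const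
  have hzU : z ∈ U := h0
  have hF : ContDiffOn ℂ (⊤ : ℕ∞) (fun w => T (w + r) / T w) U :=
    hTs.contDiffOn.div hT.contDiffOn (fun w hw => hw)
  have hquot : ∀ X, logD X (fun w => T (w + r) / T w) z
      = dd X T (z + r) / T (z + r) - dd X T z / T z := by
    intro X
    rw [logD_eq]
    simp only
    rw [dd_div (F := fun w => T (w + r)) (smooth_diffAt hU hTs.contDiffOn hzU)
      (smooth_diffAt hU hT.contDiffOn hzU) h0, dd_shift]
    field_simp
  have e2 : logD2 V (fun w => T (w + r) / T w) z =
      (dd V (dd V T) (z + r) / T (z + r) - (dd V T (z + r) / T (z + r)) ^ 2)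
      - (dd V (dd V T) z / T z - (dd V T z / T z) ^ 2) := by
    rw [logD2_val hU hF V hzU (div_ne_zero h1 h0),
      dd2_div hU hTs.contDiffOn hT.contDiffOn (fun w hw => hw) V z hzU,
      dd_div (F := fun w => T (w + r)) (smooth_diffAt hU hTs.contDiffOn hzU)
      (smooth_diffAt hU hT.contDiffOn hzU) h0, dd_shift, dd_shift]
    field_simp
    ring
  rw [hquot, hquot, e2, logD2_val hU hT.contDiffOn V hzU h0] at H
  exact H

lemma lem_plus {B : Matrix (Fin g) (Fin g) ℂ} (hT : ContDiff ℂ (⊤ : ℕ∞) (theta B))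
    (V W r : Fin g → ℂ) (K₁ K₂ : ℂ) (hD : DegFay B V W r K₁ K₂)
    (z : Fin g → ℂ) (h0 : theta B z ≠ 0) :
    dd W (fun w => theta B (w + r) / theta B w) z
    + dd V (dd V (fun w => theta B (w + r) / theta B w)) z
    - 2 * K₁ * dd V (fun w => theta B (w + r) / theta B w) z
    + (K₁ ^ 2 + 2 * logD2 V (theta B) z + K₂) * (theta B (z + r) / theta B z) = 0 := by
  set T := theta B with hTdef
  have hTs : ContDiff ℂ (⊤ : ℕ∞) (fun w => T (w + r)) := hT.comp (contDiff_id.add contDiff_const)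
  set U : Set (Fin g → ℂ) := {w | T w ≠ 0} with hUdef
  have hU : IsOpen U := isOpen_ne_fun hT.continuous continuous_const
  have hF : ContDiffOn ℂ (⊤ : ℕ∞) (fun w => T (w + r) / T w) U :=
    hTs.contDiffOn.div hT.contDiffOn (fun w hw => hw)
  have hL : ContDiffOn ℂ (⊤ : ℕ∞) (logD2 V T) U := by
    rw [logD2_eq]
    exact dd_smooth hU ((dd_smooth hU hT.contDiffOn V).div hT.contDiffOn (fun w hw => hw)) V
  set Q : (Fin g → ℂ) → ℂ := fun z => dd W (fun w => T (w + r) / T w) z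
    + dd V (dd V (fun w => T (w + r) / T w)) z
    - 2 * K₁ * dd V (fun w => T (w + r) / T w) z
    + (K₁ ^ 2 + 2 * logD2 V T z + K₂) * (T (z + r) / T z) with hQ
  have hQc : ContinuousOn Q U := by
    have c1 := (dd_smooth hU hF W).continuousOn
    have c2 := (dd_smooth hU (dd_smooth hU hF V) V).continuousOn
    have c3 := (dd_smooth hU hF V).continuousOn
    have c4 := hF.continuousOn
    have c5 := hL.continuousOn
    exact ((c1.add c2).sub (continuousOn_const.mul c3)).add
      (((continuousOn_const.add (continuousOn_const.mul c5)).add continuousOn_const).mul c4)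
  have hgood : ∀ w ∈ U, T (w + r) ≠ 0 → Q w = 0 := by
    intro w hw h1
    have hw0 : T w ≠ 0 := hw
    have H := degFay_expand hT V W r K₁ K₂ w hw h1 (hD w hw h1)
    simp only [hQ]
    rw [logD2_val hU hT.contDiffOn V hw hw,
      dd2_div hU hTs.contDiffOn hT.contDiffOn (fun w hw => hw) V w hw,
      dd_div (F := fun w => T (w + r)) (smooth_diffAt hU hTs.contDiffOn hw)
        (smooth_diffAt hU hT.contDiffOn hw) hw,
      dd_div (F := fun w => T (w + r)) (smooth_diffAt hU hTs.contDiffOn hw)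
        (smooth_diffAt hU hT.contDiffOn hw) hw, dd_shift, dd_shift, dd_shift]
    have H2 := congrArg (fun x => x * (T (w + r) / T w)) H
    simp only [zero_mul] at H2
    rw [← H2]
    field_simp
    ring
  have hfr : ∃ᶠ w in 𝓝 z, T (w + r) ≠ 0 :=
    dense_ne_zero hTs (z0 := z - r) (by simpa using h0) z
  have hc : ContinuousAt Q z := hQc.continuousAt (hU.mem_nhds h0)
  change Q z = 0
  by_contra hne
  have h2 := hc.eventually_ne hne
  obtain ⟨w, hw1, hw2, hw3⟩ := (hfr.and_eventually (h2.and (hU.mem_nhds h0))).exists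
  exact hw2 (hgood w hw3 hw1)

lemma lem_minus {B : Matrix (Fin g) (Fin g) ℂ} (hT : ContDiff ℂ (⊤ : ℕ∞) (theta B))
    (V W r s : Fin g → ℂ) (hrs : s = -r) (K₁ K₂ : ℂ) (hD : DegFay B V W s K₁ K₂)
    (z : Fin g → ℂ) (h0 : theta B z ≠ 0) :
    -dd W (fun w => theta B (w + r) / theta B w) z
    + dd V (dd V (fun w => theta B (w + r) / theta B w)) z
    + 2 * K₁ * dd V (fun w => theta B (w + r) / theta B w) z
    + (K₁ ^ 2 + 2 * logD2 V (theta B) z + K₂) * (theta B (z + r) / theta B z) = 0 := by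
  set T := theta B with hTdef
  have hTs : ContDiff ℂ (⊤ : ℕ∞) (fun w => T (w + r)) := hT.comp (contDiff_id.add contDiff_const)
  set U : Set (Fin g → ℂ) := {w | T w ≠ 0} with hUdef
  have hU : IsOpen U := isOpen_ne_fun hT.continuous continuous_const
  have hF : ContDiffOn ℂ (⊤ : ℕ∞) (fun w => T (w + r) / T w) U :=
    hTs.contDiffOn.div hT.contDiffOn (fun w hw => hw)
  have hL : ContDiffOn ℂ (⊤ : ℕ∞) (logD2 V T) U := by
    rw [logD2_eq]
    exact dd_smooth hU ((dd_smooth hU hT.contDiffOn V).div hT.contDiffOn (fun w hw => hw)) V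
  set Q : (Fin g → ℂ) → ℂ := fun z => -dd W (fun w => T (w + r) / T w) z
    + dd V (dd V (fun w => T (w + r) / T w)) z
    + 2 * K₁ * dd V (fun w => T (w + r) / T w) z
    + (K₁ ^ 2 + 2 * logD2 V T z + K₂) * (T (z + r) / T z) with hQ
  have hQc : ContinuousOn Q U := by
    have c1 := (dd_smooth hU hF W).continuousOn
    have c2 := (dd_smooth hU (dd_smooth hU hF V) V).continuousOn
    have c3 := (dd_smooth hU hF V).continuousOn
    have c4 := hF.continuousOn
    have c5 := hL.continuousOn
    exact ((c1.neg.add c2).add (continuousOn_const.mul c3)).add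
      (((continuousOn_const.add (continuousOn_const.mul c5)).add continuousOn_const).mul c4)
  have hgood : ∀ w ∈ U, T (w + r) ≠ 0 → Q w = 0 := by
    intro w hw h1
    have hw0 : T w ≠ 0 := hw
    have hws : w + r + s = w := by rw [hrs]; abel
    have hw1 : T (w + r + s) ≠ 0 := by rw [hws]; exact hw0
    have H := degFay_expand hT V W s K₁ K₂ (w + r) h1 hw1 (hD (w + r) h1 hw1)
    rw [hws] at H
    simp only [hQ]
    rw [logD2_val hU hT.contDiffOn V hw hw,
      dd2_div hU hTs.contDiffOn hT.contDiffOn (fun w hw => hw) V w hw,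
      dd_div (F := fun w => T (w + r)) (smooth_diffAt hU hTs.contDiffOn hw)
        (smooth_diffAt hU hT.contDiffOn hw) hw,
      dd_div (F := fun w => T (w + r)) (smooth_diffAt hU hTs.contDiffOn hw)
        (smooth_diffAt hU hT.contDiffOn hw) hw, dd_shift, dd_shift, dd_shift]
    have H2 := congrArg (fun x => x * (T (w + r) / T w)) H
    simp only [zero_mul] at H2
    rw [← H2]
    field_simp
    ring
  have hfr : ∃ᶠ w in 𝓝 z, T (w + r) ≠ 0 :=
    dense_ne_zero hTs (z0 := z - r) (by simpa using h0) z
  have hc : ContinuousAt Q z := hQc.continuousAt (hU.mem_nhds h0)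
  change Q z = 0
  by_contra hne
  have h2 := hc.eventually_ne hne
  obtain ⟨w, hw1, hw2, hw3⟩ := (hfr.and_eventually (h2.and (hU.mem_nhds h0))).exists
  exact hw2 (hgood w hw3 hw1)

end fay

/-- theta-functional solutions of the complexified Davey–Stewartson
system. -/
theorem stmt_7 {g : ℕ} (hg : 1 ≤ g) (B : Matrix (Fin g) (Fin g) ℂ)
    (hBsymm : B.IsSymm)
    (hBneg : ∀ x : Fin g → ℝ, x ≠ 0 → ∑ i, ∑ j, (B i j).re * x i * x j < 0)
    (Va Wa Vb Wb r : Fin g → ℂ) (K1ab K2ab K1ba K2ba q₁ q₂ : ℂ)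
    (hFa : DegFay B Va Wa r K1ab K2ab)
    (hFb : DegFay B Vb Wb (-r) K1ba K2ba)
    (hBF : BilinFay B Va Vb r q₁ q₂)
    (κ₁ κ₂ A : ℂ) (hκ₁ : κ₁ ≠ 0) (hκ₂ : κ₂ ≠ 0) (hA : A ≠ 0)
    (h : ℂ) (d : Fin g → ℂ)
    (Z : ℂ → ℂ → ℂ → Fin g → ℂ)
    (hZ : ∀ ξ η t : ℂ, Z ξ η t = fun i =>
      I * (κ₁ * Va i * ξ - κ₂ * Vb i * η + (κ₁ ^ 2 * Wa i - κ₂ ^ 2 * Wb i) * t / 2))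
    (G₁ G₂ G₃ : ℂ) (hG₁ : G₁ = κ₁ * K1ab) (hG₂ : G₂ = κ₂ * K1ba)
    (hG₃ : G₃ = κ₁ ^ 2 * K2ab + κ₂ ^ 2 * K2ba + h)
    (ψ ψs φ : ℂ → ℂ → ℂ → ℂ)
    (hψ : ∀ ξ η t : ℂ, ψ ξ η t =
      A * theta B (Z ξ η t - d + r) / theta B (Z ξ η t - d) *
        Complex.exp (I * (-(G₁ * ξ) - G₂ * η + G₃ * t / 2)))
    (hψs : ∀ ξ η t : ℂ, ψs ξ η t =
      -(κ₁ * κ₂ * q₂ / A) * theta B (Z ξ η t - d - r) / theta B (Z ξ η t - d) *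
        Complex.exp (I * (G₁ * ξ + G₂ * η - G₃ * t / 2)))
    (hφ : ∀ ξ η t : ℂ, φ ξ η t =
      (1 / 2) * deriv (fun ξ' : ℂ =>
          deriv (fun ξ'' : ℂ => theta B (Z ξ'' η t - d)) ξ' / theta B (Z ξ' η t - d)) ξ
        + (1 / 2) * deriv (fun η' : ℂ =>
            deriv (fun η'' : ℂ => theta B (Z ξ η'' t - d)) η' / theta B (Z ξ η' t - d)) η
        + h / 4) :
    ∀ ξ η t : ℂ, theta B (Z ξ η t - d) ≠ 0 →
      (I * deriv (fun t' : ℂ => ψ ξ η t') t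
        + (1 / 2) * (deriv (fun ξ' : ℂ => deriv (fun ξ'' : ℂ => ψ ξ'' η t) ξ') ξ
            + deriv (fun η' : ℂ => deriv (fun η'' : ℂ => ψ ξ η'' t) η') η)
        + 2 * φ ξ η t * ψ ξ η t = 0) ∧
      (-I * deriv (fun t' : ℂ => ψs ξ η t') t
        + (1 / 2) * (deriv (fun ξ' : ℂ => deriv (fun ξ'' : ℂ => ψs ξ'' η t) ξ') ξ
            + deriv (fun η' : ℂ => deriv (fun η'' : ℂ => ψs ξ η'' t) η') η)
        + 2 * φ ξ η t * ψs ξ η t = 0) ∧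
      (deriv (fun ξ' : ℂ => deriv (fun η' : ℂ => φ ξ' η' t) η) ξ
        + (1 / 2) * (deriv (fun ξ' : ℂ =>
              deriv (fun ξ'' : ℂ => ψ ξ'' η t * ψs ξ'' η t) ξ') ξ
            + deriv (fun η' : ℂ =>
              deriv (fun η'' : ℂ => ψ ξ η'' t * ψs ξ η'' t) η') η)
        = 0) := by
  have hT := theta_contDiff B hBneg
  set T := theta B with hTdef
  set U : Set (Fin g → ℂ) := {w | T w ≠ 0} with hUdef
  have hU : IsOpen U := isOpen_ne_fun hT.continuous continuous_const
  have hUne : ∀ w ∈ U, T w ≠ 0 := fun w hw => hw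
  have hTU : ContDiffOn ℂ (⊤ : ℕ∞) T U := hT.contDiffOn
  have hFs : ∀ r : Fin g → ℂ, ContDiffOn ℂ (⊤ : ℕ∞) (fun w => T (w + r) / T w) U := fun r =>
    (hT.comp (contDiff_id.add contDiff_const)).contDiffOn.div hTU hUne
  -- the three lines
  have hpξ : ∀ η t s, HasDerivAt (fun s => Z s η t - d) ((I * κ₁) • Va) s := by
    intro η t s
    simp only [hZ]
    rw [hasDerivAt_pi]
    intro i
    have h1 : HasDerivAt (fun s : ℂ => (I * κ₁ * Va i) * s
        + (I * (- κ₂ * Vb i * η + (κ₁ ^ 2 * Wa i - κ₂ ^ 2 * Wb i) * t / 2) - d i)) _ s :=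
      ((hasDerivAt_id s).const_mul _).add_const _
    refine (h1.congr_deriv ?_).congr_of_eventuallyEq (Eventually.of_forall fun s => ?_)
    · simp
    · simp only [Pi.sub_apply]; ring
  have hpη : ∀ ξ t s, HasDerivAt (fun s => Z ξ s t - d) ((-(I * κ₂)) • Vb) s := by
    intro ξ t s
    simp only [hZ]
    rw [hasDerivAt_pi]
    intro i
    have h1 : HasDerivAt (fun s : ℂ => (-(I * κ₂) * Vb i) * s
        + (I * (κ₁ * Va i * ξ + (κ₁ ^ 2 * Wa i - κ₂ ^ 2 * Wb i) * t / 2) - d i)) _ s :=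
      ((hasDerivAt_id s).const_mul _).add_const _
    refine (h1.congr_deriv ?_).congr_of_eventuallyEq (Eventually.of_forall fun s => ?_)
    · simp
    · simp only [Pi.sub_apply]; ring
  have hpt : ∀ ξ η s, HasDerivAt (fun s => Z ξ η s - d)
      ((I * κ₁ ^ 2 / 2) • Wa + (-(I * κ₂ ^ 2 / 2)) • Wb) s := by
    intro ξ η s
    simp only [hZ]
    rw [hasDerivAt_pi]
    intro i
    have h1 : HasDerivAt (fun s : ℂ => (I * κ₁ ^ 2 / 2 * Wa i + -(I * κ₂ ^ 2 / 2) * Wb i) * s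
        + (I * (κ₁ * Va i * ξ - κ₂ * Vb i * η) - d i)) _ s :=
      ((hasDerivAt_id s).const_mul _).add_const _
    refine (h1.congr_deriv ?_).congr_of_eventuallyEq (Eventually.of_forall fun s => ?_)
    · simp
    · simp only [Pi.sub_apply]; ring
  have hI2 : I ^ 2 = -1 := Complex.I_sq
  have hLs : ∀ V, ContDiffOn ℂ (⊤ : ℕ∞) (logD V T) U := fun V =>
    (dd_smooth hU hTU V).div hTU hUne
  have hL2s : ∀ V, ContDiffOn ℂ (⊤ : ℕ∞) (logD2 V T) U := fun V => dd_smooth hU (hLs V) V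
  -- second logarithmic derivatives along lines
  have hlog : ∀ (p : ℂ → Fin g → ℂ) (c : ℂ) (V : Fin g → ℂ),
      (∀ s, HasDerivAt p (c • V) s) → ∀ s, p s ∈ U →
      deriv (fun s' => deriv (fun s'' => T (p s'')) s' / T (p s')) s
        = c ^ 2 * logD2 V T (p s) := by
    intro p c V hp s hs
    rw [line_deriv' hU (contDiffOn_const.mul (hLs V) : ContDiffOn ℂ (⊤ : ℕ∞)
      (fun w => c * logD V T w) U) p (c • V) hp _ ?_ s hs]
    · rw [dd_smul]
      simp only
      rw [dd_const_mul (smooth_diffAt hU (hLs V) hs)]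
      have : dd V (logD V T) (p s) = logD2 V T (p s) := rfl
      rw [this]; ring
    · intro s hs
      rw [line_deriv' hU hTU p (c • V) hp (fun s => T (p s)) (fun _ _ => rfl) s hs, dd_smul]
      simp only [logD_eq]
      ring
  have hφ' : ∀ ξ η t, Z ξ η t - d ∈ U → φ ξ η t = (-(κ₁ ^ 2 / 2) * logD2 Va T (Z ξ η t - d)
      + -(κ₂ ^ 2 / 2) * logD2 Vb T (Z ξ η t - d)) + h / 4 := by
    intro ξ η t hz
    rw [hφ, hlog (fun s => Z s η t - d) _ _ (hpξ η t) ξ hz,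
      hlog (fun s => Z ξ s t - d) _ _ (hpη ξ t) η hz]
    linear_combination (1 / 2 * κ₁ ^ 2 * logD2 Va T (Z ξ η t - d)
      + 1 / 2 * κ₂ ^ 2 * logD2 Vb T (Z ξ η t - d)) * hI2
  intro ξ η t hz0
  have hz : Z ξ η t - d ∈ U := hz0
  set z := Z ξ η t - d with hzdef
  refine ⟨?_, ?_, ?_⟩
  · have h1 := lem_plus hT Va Wa r K1ab K2ab hFa z hz
    have h2 := lem_minus hT Vb Wb r (-r) rfl K1ba K2ba hFb z hz
    simp only [← hTdef] at h1 h2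
    have d1 := line_deriv2 hU (hFs r) (fun s => Z s η t - d) _ (hpξ η t) A (-(I * G₁))
      (I * (- G₂ * η + G₃ * t / 2)) (fun s => ψ s η t) (by
        intro s _
        simp only [hψ]
        rw [mul_div_assoc]; congr 2; ring) ξ hz
    have d2 := line_deriv2 hU (hFs r) (fun s => Z ξ s t - d) _ (hpη ξ t) A (-(I * G₂))
      (I * (- (G₁ * ξ) + G₃ * t / 2)) (fun s => ψ ξ s t) (by
        intro s _
        simp only [hψ]
        rw [mul_div_assoc]; congr 2; ring) η hz
    have d3 := line_deriv hU (hFs r) (fun s => Z ξ η s - d) _ (hpt ξ η) A (I * G₃ / 2)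
      (I * (- (G₁ * ξ) - G₂ * η)) (fun s => ψ ξ η s) (by
        intro s _
        simp only [hψ]
        rw [mul_div_assoc]; congr 2; ring) t hz
    have e1 : (-(I * G₁)) * ξ + I * (- G₂ * η + G₃ * t / 2)
      = I * (-(G₁ * ξ) - G₂ * η + G₃ * t / 2) := by ring
    have e2 : (-(I * G₂)) * η + I * (- (G₁ * ξ) + G₃ * t / 2)
      = I * (-(G₁ * ξ) - G₂ * η + G₃ * t / 2) := by ring
    have e3 : (I * G₃ / 2) * t + I * (- (G₁ * ξ) - G₂ * η)
      = I * (-(G₁ * ξ) - G₂ * η + G₃ * t / 2) := by ring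
    have s1 : dd ((I * κ₁ ^ 2 / 2) • Wa + (-(I * κ₂ ^ 2 / 2)) • Wb) (fun w => T (w + r) / T w) z
      = (I * κ₁ ^ 2 / 2) * dd Wa (fun w => T (w + r) / T w) z
        + (-(I * κ₂ ^ 2 / 2)) * dd Wb (fun w => T (w + r) / T w) z := by simp [dd]
    have hd : ∀ V, DifferentiableAt ℂ (dd V (fun w => T (w + r) / T w)) z := fun V =>
      smooth_diffAt hU (dd_smooth hU (hFs r) V) hz
    simp only [e1, e2, e3, ← hzdef, s1, dd_smul, dd_const_mul (hd _)] at d1 d2 d3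
    rw [d1, d2, d3, hφ' ξ η t hz, hψ, ← hzdef, hG₃, hG₁, hG₂]
    generalize Complex.exp _ = e
    rw [mul_div_assoc A]
    generalize dd Va (dd Va (fun w => T (w + r) / T w)) z = x1 at *
    generalize dd Vb (dd Vb (fun w => T (w + r) / T w)) z = x2 at *
    generalize dd Va (fun w => T (w + r) / T w) z = x3 at *
    generalize dd Vb (fun w => T (w + r) / T w) z = x4 at *
    generalize dd Wa (fun w => T (w + r) / T w) z = x5 at *
    generalize dd Wb (fun w => T (w + r) / T w) z = x6 at *
    generalize logD2 Va T z = l1 at *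
    generalize logD2 Vb T z = l2 at *
    generalize T (z + r) / T z = f at *
    have hII : I * I = -1 := Complex.I_mul_I
    linear_combination (-(κ₁ ^ 2 / 2) * A * e) * h1 + (-(κ₂ ^ 2 / 2) * A * e) * h2
      + (A * e * ((κ₁ ^ 2 * K2ab + κ₂ ^ 2 * K2ba + h) / 2 * f + κ₁ ^ 2 / 2 * x5 - κ₂ ^ 2 / 2 * x6
        + 1 / 2 * (κ₁ ^ 2 * K1ab ^ 2 * f - 2 * κ₁ ^ 2 * K1ab * x3 + κ₁ ^ 2 * x1)
        + 1 / 2 * (κ₂ ^ 2 * K1ba ^ 2 * f + 2 * κ₂ ^ 2 * K1ba * x4 + κ₂ ^ 2 * x2))) * hII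
  · have h1 := lem_minus hT Va Wa (-r) r (by simp) K1ab K2ab hFa z hz
    have h2 := lem_plus hT Vb Wb (-r) K1ba K2ba hFb z hz
    simp only [← hTdef] at h1 h2
    have d1 := line_deriv2 hU (hFs (-r)) (fun s => Z s η t - d) _ (hpξ η t)
      (-(κ₁ * κ₂ * q₂ / A)) (I * G₁)
      (I * (G₂ * η - G₃ * t / 2)) (fun s => ψs s η t) (by
        intro s _
        simp only [hψs, ← sub_eq_add_neg]
        rw [mul_div_assoc]; congr 2; ring) ξ hz
    have d2 := line_deriv2 hU (hFs (-r)) (fun s => Z ξ s t - d) _ (hpη ξ t)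
      (-(κ₁ * κ₂ * q₂ / A)) (I * G₂)
      (I * (G₁ * ξ - G₃ * t / 2)) (fun s => ψs ξ s t) (by
        intro s _
        simp only [hψs, ← sub_eq_add_neg]
        rw [mul_div_assoc]; congr 2; ring) η hz
    have d3 := line_deriv hU (hFs (-r)) (fun s => Z ξ η s - d) _ (hpt ξ η)
      (-(κ₁ * κ₂ * q₂ / A)) (-(I * G₃ / 2))
      (I * (G₁ * ξ + G₂ * η)) (fun s => ψs ξ η s) (by
        intro s _
        simp only [hψs, ← sub_eq_add_neg]
        rw [mul_div_assoc]; congr 2; ring) t hz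
    have e1 : (I * G₁) * ξ + I * (G₂ * η - G₃ * t / 2)
      = I * (G₁ * ξ + G₂ * η - G₃ * t / 2) := by ring
    have e2 : (I * G₂) * η + I * (G₁ * ξ - G₃ * t / 2)
      = I * (G₁ * ξ + G₂ * η - G₃ * t / 2) := by ring
    have e3 : (-(I * G₃ / 2)) * t + I * (G₁ * ξ + G₂ * η)
      = I * (G₁ * ξ + G₂ * η - G₃ * t / 2) := by ring
    have s1 : dd ((I * κ₁ ^ 2 / 2) • Wa + (-(I * κ₂ ^ 2 / 2)) • Wb) (fun w => T (w + -r) / T w) z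
      = (I * κ₁ ^ 2 / 2) * dd Wa (fun w => T (w + -r) / T w) z
        + (-(I * κ₂ ^ 2 / 2)) * dd Wb (fun w => T (w + -r) / T w) z := by simp [dd]
    have hd : ∀ V, DifferentiableAt ℂ (dd V (fun w => T (w + -r) / T w)) z := fun V =>
      smooth_diffAt hU (dd_smooth hU (hFs (-r)) V) hz
    simp only [e1, e2, e3, ← hzdef, s1, dd_smul, dd_const_mul (hd _)] at d1 d2 d3
    rw [d1, d2, d3, hφ' ξ η t hz, hψs, ← hzdef, hG₃, hG₁, hG₂, sub_eq_add_neg z r]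
    generalize Complex.exp _ = e
    rw [mul_div_assoc (-(κ₁ * κ₂ * q₂ / A))]
    generalize -(κ₁ * κ₂ * q₂ / A) = A' at *
    generalize dd Va (dd Va (fun w => T (w + -r) / T w)) z = x1 at *
    generalize dd Vb (dd Vb (fun w => T (w + -r) / T w)) z = x2 at *
    generalize dd Va (fun w => T (w + -r) / T w) z = x3 at *
    generalize dd Vb (fun w => T (w + -r) / T w) z = x4 at *
    generalize dd Wa (fun w => T (w + -r) / T w) z = x5 at *
    generalize dd Wb (fun w => T (w + -r) / T w) z = x6 at *
    generalize logD2 Va T z = l1 at *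
    generalize logD2 Vb T z = l2 at *
    generalize T (z + -r) / T z = f at *
    have hII : I * I = -1 := Complex.I_mul_I
    linear_combination (-(κ₁ ^ 2 / 2) * A' * e) * h1 + (-(κ₂ ^ 2 / 2) * A' * e) * h2
      + (A' * e * ((κ₁ ^ 2 * K2ab + κ₂ ^ 2 * K2ba + h) / 2 * f - κ₁ ^ 2 / 2 * x5 + κ₂ ^ 2 / 2 * x6
        + 1 / 2 * (κ₁ ^ 2 * K1ab ^ 2 * f + 2 * κ₁ ^ 2 * K1ab * x3 + κ₁ ^ 2 * x1)
        + 1 / 2 * (κ₂ ^ 2 * K1ba ^ 2 * f - 2 * κ₂ ^ 2 * K1ba * x4 + κ₂ ^ 2 * x2))) * hII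
  · -- third equation
    set M : (Fin g → ℂ) → ℂ := dd Va (logD Vb T) with hM
    have hMs : ContDiffOn ℂ (⊤ : ℕ∞) M U := dd_smooth hU (hLs Vb) Va
    set N : (Fin g → ℂ) → ℂ := fun w => -(κ₁ * κ₂) * M w + κ₁ * κ₂ * q₁ with hN
    have hNs : ContDiffOn ℂ (⊤ : ℕ∞) N U := (contDiffOn_const.mul hMs).add contDiffOn_const
    have hprod : ∀ ξ η t, Z ξ η t - d ∈ U → ψ ξ η t * ψs ξ η t = N (Z ξ η t - d) := by
      intro ξ η t hz
      have hz' := hUne _ hz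
      have h1 : M (Z ξ η t - d) = _ := hBF _ hz
      rw [hN]
      simp only [h1, hψ, hψs]
      have he : Complex.exp (I * (-(G₁ * ξ) - G₂ * η + G₃ * t / 2))
          * Complex.exp (I * (G₁ * ξ + G₂ * η - G₃ * t / 2)) = 1 := by
        rw [← Complex.exp_add, ← Complex.exp_zero]; congr 1; ring
      simp only [← hTdef]
      generalize Complex.exp (I * (-(G₁ * ξ) - G₂ * η + G₃ * t / 2)) = a at *
      generalize Complex.exp (I * (G₁ * ξ + G₂ * η - G₃ * t / 2)) = b at *
      generalize T (Z ξ η t - d) = x at *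
      generalize T (Z ξ η t - d + r) = y at *
      generalize T (Z ξ η t - d - r) = y' at *
      have : A * y / x * a * (-(κ₁ * κ₂ * q₂ / A) * y' / x * b)
        = (A * y / x * (-(κ₁ * κ₂ * q₂ / A) * y' / x)) * (a * b) := by ring
      rw [this, he]
      field_simp
      ring
    set P : (Fin g → ℂ) → ℂ := fun w => (-(κ₁ ^ 2 / 2) * logD2 Va T w
      + -(κ₂ ^ 2 / 2) * logD2 Vb T w) + h / 4 with hP
    have hPs : ContDiffOn ℂ (⊤ : ℕ∞) P U :=
      ((contDiffOn_const.mul (hL2s Va)).add (contDiffOn_const.mul (hL2s Vb))).add contDiffOn_const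
    have d1 := line_deriv2' hU hNs (fun s => Z s η t - d) _ (hpξ η t)
      (fun s => ψ s η t * ψs s η t) (fun s hs => hprod s η t hs) ξ hz
    have d2 := line_deriv2' hU hNs (fun s => Z ξ s t - d) _ (hpη ξ t)
      (fun s => ψ ξ s t * ψs ξ s t) (fun s hs => hprod ξ s t hs) η hz
    have d3 := line_deriv' hU (dd_smooth hU hPs ((-(I * κ₂)) • Vb)) (fun s => Z s η t - d) _ (hpξ η t)
      (fun s => deriv (fun s' => φ s s' t) η) (fun s hs =>
        line_deriv' hU hPs (fun s' => Z s s' t - d) _ (hpη s t) (fun s' => φ s s' t)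
          (fun s' hs' => hφ' s s' t hs') η hs) ξ hz
    -- derivatives of N and P
    have dN : ∀ V, ∀ w ∈ U, dd V N w = -(κ₁ * κ₂) * dd V M w := by
      intro V w hw
      have hd := smooth_diffAt hU hMs hw
      rw [hN, dd_add (F := fun w => -(κ₁ * κ₂) * M w) (hd.const_mul _) (differentiableAt_const _),
        dd_const_mul hd]
      simp [dd]
    have dN2 : ∀ V, ∀ w ∈ U, dd V (dd V N) w = -(κ₁ * κ₂) * dd V (dd V M) w := by
      intro V w hw
      rw [dd_congr hU (dN V) V w hw, dd_const_mul (smooth_diffAt hU (dd_smooth hU hMs V) hw)]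
    have hsym : ∀ w ∈ U, M w = dd Vb (logD Va T) w := by
      intro w hw
      have a1 := smooth_diffAt hU (dd_smooth hU hTU Va) hw
      have a2 := smooth_diffAt hU (dd_smooth hU hTU Vb) hw
      have a3 := smooth_diffAt hU hTU hw
      rw [hM, logD_eq, logD_eq, dd_div a2 a3 hw, dd_div a1 a3 hw, dd_comm hU hTU Va Vb w hw]
      ring
    have dP : ∀ V, ∀ w ∈ U, dd V P w
        = -(κ₁ ^ 2 / 2) * dd V (logD2 Va T) w + -(κ₂ ^ 2 / 2) * dd V (logD2 Vb T) w := by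
      intro V w hw
      have b1 := smooth_diffAt hU (hL2s Va) hw
      have b2 := smooth_diffAt hU (hL2s Vb) hw
      rw [hP, dd_add (F := fun w => -(κ₁ ^ 2 / 2) * logD2 Va T w + -(κ₂ ^ 2 / 2) * logD2 Vb T w)
        ((b1.const_mul _).add (b2.const_mul _)) (differentiableAt_const _),
        dd_add (F := fun w => -(κ₁ ^ 2 / 2) * logD2 Va T w) (b1.const_mul _) (b2.const_mul _),
        dd_const_mul b1, dd_const_mul b2]
      simp [dd]
    have c1 : ∀ w ∈ U, dd Vb (logD2 Va T) w = dd Va M w := by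
      intro w hw
      have : logD2 Va T = dd Va (logD Va T) := rfl
      rw [this, dd_comm hU (hLs Va) Vb Va w hw]
      exact (dd_congr hU hsym Va w hw).symm
    have c2 : ∀ w ∈ U, dd Va (logD2 Vb T) w = dd Vb M w := by
      intro w hw
      have : logD2 Vb T = dd Vb (logD Vb T) := rfl
      rw [this, dd_comm hU (hLs Vb) Va Vb w hw]
    have c3 : dd Va (dd Vb P) z
        = -(κ₁ ^ 2 / 2) * dd Va (dd Va M) z + -(κ₂ ^ 2 / 2) * dd Vb (dd Vb M) z := by
      have b1 := smooth_diffAt hU (dd_smooth hU (hL2s Va) Vb) hz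
      have b2 := smooth_diffAt hU (dd_smooth hU (hL2s Vb) Vb) hz
      rw [dd_congr hU (dP Vb) Va z hz,
        dd_add (F := fun w => -(κ₁ ^ 2 / 2) * dd Vb (logD2 Va T) w)
          (b1.const_mul _) (b2.const_mul _), dd_const_mul b1, dd_const_mul b2,
        dd_congr hU c1 Va z hz, dd_comm hU (hL2s Vb) Va Vb z hz, dd_congr hU c2 Vb z hz]
    have hdN : ∀ V, DifferentiableAt ℂ (dd V N) z := fun V =>
      smooth_diffAt hU (dd_smooth hU hNs V) hz
    have hdP : ∀ V, DifferentiableAt ℂ (dd V P) z := fun V =>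
      smooth_diffAt hU (dd_smooth hU hPs V) hz
    simp only [← hzdef, dd_smul, dd_const_mul (hdN _), dd_const_mul (hdP _), dN2 _ z hz, c3]
      at d1 d2 d3
    rw [d1, d2, d3]
    have hII : I * I = -1 := Complex.I_mul_I
    generalize dd Va (dd Va M) z = x1
    generalize dd Vb (dd Vb M) z = x2
    ring
end
end
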